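/- Let (A, φ) be a noncommutative probability space, let Φ̃ : H_S(A) → ℂ be the character extending φ, and set Φ̂ = Φ̃ − ε_A. Then for every n ≥ 1, every Schröder tree t ∈ ST(n), every word w = a_1⋯a_n with a_i ∈ A, and every k ≥ 1, the k-fold convolution power satisfies Φ̂^{*k}(t ⊗ w) = ω_k(sk(t)) · φ_{π(t)}(a_1,…,a_n). -/

import Mathlib

open scoped BigOperators

/-- Planar rooted trees (rose trees). -/
inductive PTree : Type
  | node : List PTree → PTree

namespace PTree

/-- The single-vertex tree (a leaf). -/
abbrev leaf : PTree := .node []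

/-- Subtree at a given path from the root (entries select children). -/
def subtreeAt : List ℕ → PTree → Option PTree
  | [], t => some t
  | i :: p, node cs => (cs[i]?).bind (subtreeAt p)

/-- `p` is (the path of) a vertex of `t`. -/
def IsVertex (t : PTree) (p : List ℕ) : Prop := (subtreeAt p t).isSome

/-- `p` is a leaf of `t`. -/
def IsLeafAt (t : PTree) (p : List ℕ) : Prop := subtreeAt p t = some leaf

/-- `p` is an internal (non-leaf) vertex of `t`. -/
def IsInternalAt (t : PTree) (p : List ℕ) : Prop :=
  ∃ cs, subtreeAt p t = some (node cs) ∧ cs ≠ []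

/-- Schröder trees: every internal vertex has at least two children. -/
inductive IsSchroder : PTree → Prop
  | leaf : IsSchroder (node [])
  | node (cs : List PTree) : 2 ≤ cs.length → (∀ c ∈ cs, IsSchroder c) → IsSchroder (node cs)

/-- Number of leaves of a tree. -/
noncomputable def numLeaves (t : PTree) : ℕ := Nat.card {p : List ℕ // IsLeafAt t p}

/-- Number of sectors between consecutive leaves. -/
noncomputable def numSectors (t : PTree) : ℕ := numLeaves t - 1

/-- Number of internal vertices. -/
noncomputable def numInternal (t : PTree) : ℕ := Nat.card {p : List ℕ // IsInternalAt t p}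

/-- The set of Schröder trees with `n+1` leaves. -/
def ST (n : ℕ) : Set PTree := {t | IsSchroder t ∧ numLeaves t = n + 1}

/-- Number of surjective strictly order-preserving maps from the poset of internal
vertices of `t` (i.e. the vertex poset of the skeleton `sk(t)`, with the root minimal,
the order being the ancestor/prefix order) onto `{1, …, k}`. This is `ω_k(sk(t))`. -/
noncomputable def omegaSkK (t : PTree) (k : ℕ) : ℕ :=
  Nat.card {f : {p : List ℕ // IsInternalAt t p} → Fin k //
    Function.Surjective f ∧ ∀ v w, v.1 <+: w.1 → v ≠ w → f v < f w}

/-- The Murua coefficient `ω(sk(t))` of the skeleton of `t`. -/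
noncomputable def omegaSk (t : PTree) : ℂ :=
  ∑ k ∈ Finset.Icc 1 (numInternal t), ((-1 : ℂ) ^ (k + 1) / (k : ℂ)) * (omegaSkK t k : ℂ)

/-- The subtree of `t` at path `p` (junk value: a leaf). -/
noncomputable def subtree! (t : PTree) (p : List ℕ) : PTree := (subtreeAt p t).getD leaf

/-- Number of leaves of `t` strictly to the left of the subtree at `p`. -/
noncomputable def leavesBefore (t : PTree) (p : List ℕ) : ℕ :=
  Nat.card {q : List ℕ // IsLeafAt t q ∧ List.Lex (· < ·) q p ∧ ¬ p <+: q}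

/-- Sector number `i` (0-indexed: the sector between the `(i+1)`-st and `(i+2)`-nd leaves of `t`)
lies strictly inside the subtree of `t` rooted at `p`. -/
def SectorIn (t : PTree) (p : List ℕ) (i : ℕ) : Prop :=
  leavesBefore t p ≤ i ∧ i + 2 ≤ leavesBefore t p + numLeaves (subtree! t p)

/-- The internal vertex `v` of `t` owns sector `i`: the sector lies in the corolla at `v`,
i.e. inside the subtree at `v` but not inside the subtree at any strictly deeper vertex. -/
def OwnsSector (t : PTree) (v : List ℕ) (i : ℕ) : Prop :=
  IsInternalAt t v ∧ SectorIn t v i ∧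
    ∀ w, IsInternalAt t w → v <+: w → w ≠ v → ¬ SectorIn t w i

/-- Sectors `i` and `j` belong to the same block of the noncrossing partition `π(t)`. -/
def SameOwner (t : PTree) (i j : ℕ) : Prop := ∃ v, OwnsSector t v i ∧ OwnsSector t v j

open Classical in
/-- `φ_{π(t)}(a_1,…,a_n)`: the product over the blocks of the noncrossing partition `π(t)`
(one block per internal vertex `v`, consisting of the sectors owned by `v`) of `φ` applied to
the ordered product of the corresponding letters of `w`. -/
noncomputable def phiPi {A : Type*} [Ring A] (φ : A → ℂ) (t : PTree) (w : List A) : ℂ :=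
  ∏ᶠ v ∈ {v : List ℕ | IsInternalAt t v},
    φ ((((List.range w.length).filter fun i => OwnsSector t v i).map fun i => w.getD i 0).prod)

/-- A corolla: a root whose (at least two) children are all leaves. -/
def corolla (m : ℕ) : PTree := node (List.replicate m leaf)

/-- `t` is a corolla. -/
def IsCorolla (t : PTree) : Prop := ∃ m, 2 ≤ m ∧ t = corolla m

/-- Graft a tree `s` onto the leftmost leaf of `t`. -/
def graftLeftmost : PTree → PTree → PTree
  | node [], s => s
  | node (c :: cs), s => node (graftLeftmost c s :: cs)

/-- Trees obtained from the single-vertex tree by repeatedly grafting a corolla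
onto the leftmost leaf. -/
inductive IsBST : PTree → Prop
  | single : IsBST leaf
  | graft (t : PTree) (m : ℕ) : IsBST t → 2 ≤ m → IsBST (graftLeftmost t (corolla m))

/-- Schröder trees whose leftmost child of the root is a leaf. -/
def IsPST (t : PTree) : Prop := ∃ cs, t = node (leaf :: cs)

end PTree
namespace PTree

mutual
  /-- List of all vertex paths of a tree. -/
  def verticesList : PTree → List (List ℕ)
    | .node cs => [] :: verticesListAux 0 cs
  def verticesListAux : ℕ → List PTree → List (List ℕ)
    | _, [] => []
    | i, c :: cs => (verticesList c).map (i :: ·) ++ verticesListAux (i + 1) cs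
end

open Classical in
/-- The `Finset` of internal vertices of `t`. -/
noncomputable def internalFinset (t : PTree) : Finset (List ℕ) :=
  ((verticesList t).filter fun p => decide (IsInternalAt t p)).toFinset

open Classical in
/-- The admissible cuts of a Schröder tree `t`: sets of internal vertices such that every
path from the root to a leaf contains at most one of them (equivalently, antichains for
the ancestor/prefix order). -/
noncomputable def cutsFinset (t : PTree) : Finset (Finset (List ℕ)) :=
  (internalFinset t).powerset.filter fun c => ∀ v ∈ c, ∀ w ∈ c, v ≠ w → ¬ v <+: w

/-- A vertex path lies on the leftmost branch iff it consists of zeros. -/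
def OnLeftBranch (v : List ℕ) : Prop := v = List.replicate v.length 0

open Classical in
/-- `Adm_≺(t)`: admissible cuts whose trunk contains the leftmost leaf of `t`,
i.e. cuts containing no vertex of the leftmost branch. -/
noncomputable def cutsPrecFinset (t : PTree) : Finset (Finset (List ℕ)) :=
  (cutsFinset t).filter fun c => ∀ v ∈ c, ¬ OnLeftBranch v

open Classical in
/-- `Adm(t) \ Adm_≺(t)`: the admissible cuts containing a vertex of the leftmost branch. -/
noncomputable def cutsSuccFinset (t : PTree) : Finset (Finset (List ℕ)) :=
  (cutsFinset t).filter fun c => ∃ v ∈ c, OnLeftBranch v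

/-- Replace the subtree at a given path by a leaf. -/
def replaceLeaf : List ℕ → PTree → PTree
  | [], _ => leaf
  | i :: p, node cs => node (cs.set i (replaceLeaf p (cs.getD i leaf)))

/-- The vertices of a cut, sorted from left to right. -/
noncomputable def sortCut (t : PTree) (c : Finset (List ℕ)) : List (List ℕ) :=
  c.toList.mergeSort fun v w => Nat.ble (leavesBefore t v) (leavesBefore t w)

/-- The trunk `R_c(t)`: replace the subtree at each vertex of the cut by a leaf. -/
noncomputable def trunkTree (t : PTree) (c : Finset (List ℕ)) : PTree :=
  (sortCut t c).foldl (fun s v => replaceLeaf v s) t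

open Classical in
/-- Sector `i` of `t` is removed by the cut `c` (it lies in one of the pruned subtrees). -/
noncomputable def RemovedIdx (t : PTree) (c : Finset (List ℕ)) (i : ℕ) : Prop :=
  ∃ v ∈ c, leavesBefore t v ≤ i ∧ i < leavesBefore t v + numSectors (subtree! t v)

/-- A decorated forest: a list of Schröder trees, each `t` decorated by a word of length
`numSectors t` labelling the sectors between consecutive leaves from left to right. -/
abbrev DForest (A : Type*) := List (PTree × List A)

/-- A genuine decorated tree: a non-unit Schröder tree with matching decoration. -/
def GoodTree {A : Type*} (d : PTree × List A) : Prop :=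
  IsSchroder d.1 ∧ d.1 ≠ leaf ∧ d.2.length = numSectors d.1

/-- A genuine decorated forest. -/
def GoodForest {A : Type*} (F : DForest A) : Prop := ∀ d ∈ F, GoodTree d

open Classical in
/-- The decoration of the trunk `R_c(t ⊗ w)`: the letters of `w` at the sectors
not removed by the cut, in their original order. -/
noncomputable def trunkWord {A : Type*} [Zero A] (t : PTree) (c : Finset (List ℕ))
    (w : List A) : List A :=
  (((List.range w.length).filter fun i => decide (¬ RemovedIdx t c i)).map fun i => w.getD i 0)

open Classical in
/-- The trunk `R_c(t ⊗ w)` as a decorated forest (empty if the trunk is the unit,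
i.e. the single-leaf tree, which is identified with `1`). -/
noncomputable def trunkPart {A : Type*} [Zero A] (d : PTree × List A)
    (c : Finset (List ℕ)) : DForest A :=
  if trunkTree d.1 c = leaf then [] else [(trunkTree d.1 c, trunkWord d.1 c d.2)]

/-- The pruning `P_c(t ⊗ w)`: the ordered forest of decorated subtrees rooted at the
vertices of the cut (left to right), each carrying the contiguous subword of `w`
decorating its sectors. -/
noncomputable def prunePart {A : Type*} (d : PTree × List A)
    (c : Finset (List ℕ)) : DForest A :=
  (sortCut d.1 c).map fun v =>
    (subtree! d.1 v, (d.2.drop (leavesBefore d.1 v)).take (numSectors (subtree! d.1 v)))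

/-- All splittings `R_c(F) ⊗ P_c(F)` of a decorated forest given by tuples of admissible
cuts (one cut per tree): the combinatorial coproduct `δ_A`. -/
noncomputable def forestSplits {A : Type*} [Zero A] :
    DForest A → List (DForest A × DForest A)
  | [] => [([], [])]
  | d :: ds => (cutsFinset d.1).toList.flatMap fun c =>
      (forestSplits ds).map fun pr => (trunkPart d c ++ pr.1, prunePart d c ++ pr.2)

/-- The splittings appearing in `δ_{≺,A}`: the first tree is cut along `Adm_≺`, the
remaining ones along all admissible cuts. -/
noncomputable def forestSplitsPrec {A : Type*} [Zero A] :
    DForest A → List (DForest A × DForest A)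
  | [] => []
  | d :: ds => (cutsPrecFinset d.1).toList.flatMap fun c =>
      (forestSplits ds).map fun pr => (trunkPart d c ++ pr.1, prunePart d c ++ pr.2)

/-- The splittings appearing in `δ_{≻,A} = δ_A − δ_{≺,A}`. -/
noncomputable def forestSplitsSucc {A : Type*} [Zero A] :
    DForest A → List (DForest A × DForest A)
  | [] => []
  | d :: ds => (cutsSuccFinset d.1).toList.flatMap fun c =>
      (forestSplits ds).map fun pr => (trunkPart d c ++ pr.1, prunePart d c ++ pr.2)

/-- The convolution product `f * g = m_ℂ ∘ (f ⊗ g) ∘ δ_A` of linear functionals on the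
Hopf algebra `H_S(A)` of decorated Schröder trees (described on the basis of decorated
forests). -/
noncomputable def convD {A : Type*} [Zero A] (f g : DForest A → ℂ) : DForest A → ℂ :=
  fun F => ((forestSplits F).map fun pr => f pr.1 * g pr.2).sum

/-- The left half-shuffle product `f ≺̃ g = m_ℂ ∘ (f ⊗ g) ∘ δ_{≺,A}`. -/
noncomputable def precD {A : Type*} [Zero A] (f g : DForest A → ℂ) : DForest A → ℂ :=
  fun F => ((forestSplitsPrec F).map fun pr => f pr.1 * g pr.2).sum

/-- The right half-shuffle product `f ≻̃ g = m_ℂ ∘ (f ⊗ g) ∘ δ_{≻,A}`. -/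
noncomputable def succD {A : Type*} [Zero A] (f g : DForest A → ℂ) : DForest A → ℂ :=
  fun F => ((forestSplitsSucc F).map fun pr => f pr.1 * g pr.2).sum

open Classical in
/-- The counit `ε_A` of `H_S(A)` as a functional. -/
noncomputable def epsD {A : Type*} : DForest A → ℂ := fun F => if F = [] then 1 else 0

open Classical in
/-- The character `Φ̃ : H_S(A) → ℂ` extending `φ`: it sends a decorated tree `t ⊗ w` to
`φ(a_1 ⋯ a_n)` if `t` is a corolla and to `0` otherwise, multiplicatively on forests. -/
noncomputable def charD {A : Type*} [Ring A] (φ : A → ℂ) : DForest A → ℂ :=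
  fun F => (F.map fun d => if IsCorolla d.1 then φ d.2.prod else 0).prod

/-- `Φ̂ = Φ̃ − ε_A`. -/
noncomputable def charHatD {A : Type*} [Ring A] (φ : A → ℂ) : DForest A → ℂ :=
  fun F => charD φ F - epsD F

/-- Convolution powers `f^{*k}` (with `f^{*0} = ε_A`). -/
noncomputable def convPowD {A : Type*} [Zero A] (f : DForest A → ℂ) : ℕ → DForest A → ℂ
  | 0 => epsD
  | k + 1 => convD f (convPowD f k)

/-- Left half-shuffle powers `α^{≺̃ k}`, with `α^{≺̃ 0} = ε_A` and
`α^{≺̃ k} = α ≺̃ α^{≺̃ (k−1)}`. -/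
noncomputable def precPowD {A : Type*} [Zero A] (α : DForest A → ℂ) : ℕ → DForest A → ℂ
  | 0 => epsD
  | k + 1 => precD α (precPowD α k)

/-- Right half-shuffle powers `α^{≻̃ k}`, with `α^{≻̃ 0} = ε_A` and
`α^{≻̃ k} = α^{≻̃ (k−1)} ≻̃ α`. -/
noncomputable def succPowD {A : Type*} [Zero A] (α : DForest A → ℂ) : ℕ → DForest A → ℂ
  | 0 => epsD
  | k + 1 => succD (succPowD α k) α

/-- The left half-shuffle exponential `E_≺̃(α) = Σ_{k ≥ 0} α^{≺̃ k}`. -/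
noncomputable def ePrecD {A : Type*} [Zero A] (α : DForest A → ℂ) : DForest A → ℂ :=
  fun F => ∑ᶠ k : ℕ, precPowD α k F

/-- The right half-shuffle exponential `E_≻̃(α) = Σ_{k ≥ 0} α^{≻̃ k}`. -/
noncomputable def eSuccD {A : Type*} [Zero A] (α : DForest A → ℂ) : DForest A → ℂ :=
  fun F => ∑ᶠ k : ℕ, succPowD α k F

/-- The convolution exponential `exp^*(α) = Σ_{k ≥ 0} α^{*k} / k!`. -/
noncomputable def expStarD {A : Type*} [Zero A] (α : DForest A → ℂ) : DForest A → ℂ :=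
  fun F => ∑ᶠ k : ℕ, ((k.factorial : ℂ))⁻¹ * convPowD α k F

/-- The convolution logarithm `log^*(Φ̃) = Σ_{k ≥ 1} ((−1)^{k+1}/k) (Φ̃ − ε_A)^{*k}`. -/
noncomputable def logStarD {A : Type*} [Ring A] (φ : A → ℂ) : DForest A → ℂ :=
  fun F => ∑ᶠ k ∈ Set.Ici (1 : ℕ), ((-1 : ℂ) ^ (k + 1) / (k : ℂ)) * convPowD (charHatD φ) k F

/-- An infinitesimal character of `H_S(A)`: it vanishes on the unit (empty forest) and on
products of two or more nonempty forests. -/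
def IsInfCharD {A : Type*} (α : DForest A → ℂ) : Prop :=
  α [] = 0 ∧ ∀ F G : DForest A, F ≠ [] → G ≠ [] → α (F ++ G) = 0

end PTree


namespace PTree

theorem ne_leaf_iff {cs : List PTree} : node cs ≠ leaf ↔ cs ≠ [] := by simp

@[simp] theorem subtreeAt_nil (t : PTree) : subtreeAt [] t = some t := by
  cases t; rfl

theorem subtreeAt_cons (cs : List PTree) (i : ℕ) (p : List ℕ) (h : i < cs.length) :
    subtreeAt (i :: p) (node cs) = subtreeAt p cs[i] := by
  simp [subtreeAt, h]

theorem subtreeAt_cons_of_le (cs : List PTree) (i : ℕ) (p : List ℕ) (h : cs.length ≤ i) :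
    subtreeAt (i :: p) (node cs) = none := by
  simp [subtreeAt, h]

@[simp] theorem isInternalAt_nil {t : PTree} : IsInternalAt t [] ↔ t ≠ leaf := by
  cases t; simp [IsInternalAt]

theorem isInternalAt_cons {cs : List PTree} {i : ℕ} {p : List ℕ} :
    IsInternalAt (node cs) (i :: p) ↔ ∃ h : i < cs.length, IsInternalAt cs[i] p := by
  by_cases h : i < cs.length
  · simp [IsInternalAt, subtreeAt_cons _ _ _ h, h]
  · simp [IsInternalAt, subtreeAt_cons_of_le _ _ _ (not_lt.1 h), h]

theorem not_isInternalAt_leaf (p : List ℕ) : ¬ IsInternalAt leaf p := by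
  cases p with
  | nil => simp
  | cons i p => simp [isInternalAt_cons]

@[simp] theorem isLeafAt_nil {t : PTree} : IsLeafAt t [] ↔ t = leaf := by
  simp [IsLeafAt]

theorem isLeafAt_cons {cs : List PTree} {i : ℕ} {p : List ℕ} :
    IsLeafAt (node cs) (i :: p) ↔ ∃ h : i < cs.length, IsLeafAt cs[i] p := by
  by_cases h : i < cs.length
  · simp [IsLeafAt, subtreeAt_cons _ _ _ h, h]
  · simp [IsLeafAt, subtreeAt_cons_of_le _ _ _ (not_lt.1 h), h]

theorem mem_verticesListAux {cs : List PTree} {i : ℕ} (h : i < cs.length) {p : List ℕ}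
    (hp : p ∈ verticesList cs[i]) (m : ℕ) : (m + i) :: p ∈ verticesListAux m cs := by
  induction cs generalizing i m with
  | nil => simp at h
  | cons c cs ih =>
    rw [verticesListAux, List.mem_append]
    cases i with
    | zero => left; simpa using hp
    | succ i =>
      right
      have := ih (i := i) (by simpa using h) (by simpa using hp) (m + 1)
      rwa [Nat.add_right_comm, Nat.add_assoc] at this

theorem mem_verticesList {t s : PTree} {p : List ℕ} (h : subtreeAt p t = some s) :
    p ∈ verticesList t := by
  induction p generalizing t with
  | nil => cases t; simp [verticesList]
  | cons i p ih =>
    obtain ⟨cs⟩ := t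
    by_cases hi : i < cs.length
    · rw [subtreeAt_cons _ _ _ hi] at h
      have := mem_verticesListAux hi (ih h) 0
      rw [verticesList]
      simpa using this
    · rw [subtreeAt_cons_of_le _ _ _ (not_lt.1 hi)] at h
      simp at h

theorem finite_isLeafAt (t : PTree) : {p | IsLeafAt t p}.Finite :=
  (verticesList t).finite_toSet.subset fun _ hp => mem_verticesList hp

theorem finite_isInternalAt (t : PTree) : {p | IsInternalAt t p}.Finite :=
  (verticesList t).finite_toSet.subset fun _ ⟨_, hp, _⟩ => mem_verticesList hp

instance (t : PTree) : Finite {p // IsLeafAt t p} := (finite_isLeafAt t).to_subtype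

instance (t : PTree) : Finite {p // IsInternalAt t p} := (finite_isInternalAt t).to_subtype

theorem mem_internalFinset {t : PTree} {p : List ℕ} : p ∈ internalFinset t ↔ IsInternalAt t p := by
  simp only [internalFinset, List.mem_toFinset, List.mem_filter, decide_eq_true_eq,
    and_iff_right_iff_imp]
  exact fun ⟨_, hp, _⟩ => mem_verticesList hp

theorem mem_cutsFinset {t : PTree} {c : Finset (List ℕ)} :
    c ∈ cutsFinset t ↔ (∀ v ∈ c, IsInternalAt t v) ∧ ∀ v ∈ c, ∀ w ∈ c, v ≠ w → ¬ v <+: w := by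
  simp [cutsFinset, Finset.subset_iff, mem_internalFinset]

-- Counting leaves

/-- If the nonempty paths satisfying `P` are those passing through one of `n` children `i` and
satisfying `Q i` afterwards, and `[]` does not satisfy `P`, the paths satisfying `P` split
according to the child through which they pass. -/
def consPathEquiv {n : ℕ} (P : List ℕ → Prop) (Q : Fin n → List ℕ → Prop) (h0 : ¬ P [])
    (h : ∀ i p, P (i :: p) ↔ ∃ hi : i < n, Q ⟨i, hi⟩ p) :
    {p // P p} ≃ Σ i : Fin n, {p // Q i p} where
  toFun
    | ⟨[], hp⟩ => absurd hp h0
    | ⟨i :: p, hp⟩ => ⟨⟨i, ((h i p).1 hp).1⟩, ⟨p, ((h i p).1 hp).2⟩⟩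
  invFun x := ⟨x.1.1 :: x.2.1, (h _ _).2 ⟨x.1.2, x.2.2⟩⟩
  left_inv
    | ⟨[], hp⟩ => absurd hp h0
    | ⟨_ :: _, _⟩ => rfl
  right_inv _ := rfl

@[simp] theorem numLeaves_leaf : numLeaves leaf = 1 := by
  rw [numLeaves, Nat.card_eq_one_iff_unique]
  refine ⟨⟨?_⟩, ⟨[], by simp⟩⟩
  rintro ⟨p, hp⟩ ⟨q, hq⟩
  have : ∀ p, IsLeafAt leaf p → p = [] := fun p hp => by
    cases p with
    | nil => rfl
    | cons i p => simp [isLeafAt_cons] at hp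
  simp [this p hp, this q hq]

theorem numLeaves_node {cs : List PTree} (h : cs ≠ []) :
    numLeaves (node cs) = ∑ i : Fin cs.length, numLeaves cs[i] := by
  unfold numLeaves
  rw [Nat.card_congr (consPathEquiv (IsLeafAt (node cs)) (fun i : Fin cs.length => IsLeafAt cs[i])
    (by simpa using h) fun i p => isLeafAt_cons), Nat.card_sigma]

/-- The number of leaves of `node cs` contained in the children preceding the `i`-th one. -/
noncomputable def leavesLeft (cs : List PTree) (i : ℕ) : ℕ :=
  ∑ j : Fin cs.length, if j.1 < i then numLeaves cs[j] else 0

theorem leavesBefore_nil (t : PTree) : leavesBefore t [] = 0 := by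
  have : IsEmpty {q : List ℕ // IsLeafAt t q ∧ List.Lex (· < ·) q [] ∧ ¬ [] <+: q} :=
    ⟨fun q => q.2.2.2 List.nil_prefix⟩
  exact Nat.card_of_isEmpty

theorem leavesBefore_cons {cs : List PTree} {i : ℕ} (hi : i < cs.length) (p : List ℕ) :
    leavesBefore (node cs) (i :: p) = leavesLeft cs i + leavesBefore cs[i] p := by
  have hcs : cs ≠ [] := by rintro rfl; simp at hi
  unfold leavesBefore
  rw [Nat.card_congr (consPathEquiv
    (fun q => IsLeafAt (node cs) q ∧ List.Lex (· < ·) q (i :: p) ∧ ¬ (i :: p) <+: q)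
    (fun (j : Fin cs.length) q => IsLeafAt cs[j] q ∧
      (j.1 < i ∨ j.1 = i ∧ List.Lex (· < ·) q p ∧ ¬ p <+: q)) (by simp [hcs]) ?_)]
  · have : ∀ j : Fin cs.length, Finite {q // IsLeafAt cs[j] q ∧
        (j.1 < i ∨ j.1 = i ∧ List.Lex (· < ·) q p ∧ ¬ p <+: q)} := fun j =>
      ((finite_isLeafAt cs[j]).subset fun q hq => hq.1).to_subtype
    rw [Nat.card_sigma]
    have hj : ∀ j : Fin cs.length, Nat.card {q // IsLeafAt cs[j] q ∧
        (j.1 < i ∨ j.1 = i ∧ List.Lex (· < ·) q p ∧ ¬ p <+: q)} =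
        (if j.1 < i then numLeaves cs[j] else 0) +
          if (⟨i, hi⟩ : Fin cs.length) = j then leavesBefore cs[i] p else 0 := by
      intro j
      rcases lt_trichotomy j.1 i with h | h | h
      · have h1 : (⟨i, hi⟩ : Fin cs.length) ≠ j := fun e => by simp [← e] at h
        simp [h, h1, numLeaves]
      · subst h
        simp [leavesBefore]
      · have h1 : (⟨i, hi⟩ : Fin cs.length) ≠ j := fun e => by simp [← e] at h
        simp [h1, h.not_gt, h.ne']
    rw [Finset.sum_congr rfl fun j _ => hj j, Finset.sum_add_distrib]
    simp [leavesLeft, leavesBefore]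
  · intro j q
    rw [isLeafAt_cons, List.cons_prefix_cons]
    have hlex : List.Lex (· < ·) (j :: q) (i :: p) ↔ j < i ∨ j = i ∧ List.Lex (· < ·) q p := by
      constructor
      · intro h
        cases h with
        | rel h => exact Or.inl h
        | cons h => exact Or.inr ⟨rfl, h⟩
      · rintro (h | ⟨rfl, h⟩)
        · exact List.Lex.rel h
        · exact List.Lex.cons h
    rw [hlex]
    constructor
    · rintro ⟨⟨h1, h2⟩, h3 | ⟨rfl, h3⟩, h4⟩
      · exact ⟨h1, h2, Or.inl h3⟩
      · exact ⟨h1, h2, Or.inr ⟨rfl, h3, fun h => h4 ⟨rfl, h⟩⟩⟩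
    · rintro ⟨h1, h2, h3 | ⟨h3, h4, h5⟩⟩
      · exact ⟨⟨h1, h2⟩, Or.inl h3, fun h => by have := h.1; simp at h3; omega⟩
      · exact ⟨⟨h1, h2⟩, Or.inr ⟨h3, h4⟩, fun h => h5 h.2⟩

theorem leavesBefore_singleton {cs : List PTree} {i : ℕ} (hi : i < cs.length) :
    leavesBefore (node cs) [i] = leavesLeft cs i := by
  rw [leavesBefore_cons hi, leavesBefore_nil, add_zero]

@[simp] theorem subtree!_nil (t : PTree) : subtree! t [] = t := by simp [subtree!]

theorem subtree!_cons {cs : List PTree} {i : ℕ} (hi : i < cs.length) (p : List ℕ) :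
    subtree! (node cs) (i :: p) = subtree! cs[i] p := by
  simp [subtree!, subtreeAt_cons _ _ _ hi]

theorem leavesLeft_add_le {cs : List PTree} {i : ℕ} (hi : i < cs.length) :
    leavesLeft cs i + numLeaves cs[i] ≤ numLeaves (node cs) := by
  have hcs : cs ≠ [] := by rintro rfl; simp at hi
  rw [numLeaves_node hcs, leavesLeft]
  have : numLeaves cs[i] = ∑ j : Fin cs.length, if (⟨i, hi⟩ : Fin cs.length) = j then
      numLeaves cs[i] else 0 := by simp
  rw [this, ← Finset.sum_add_distrib]
  refine Finset.sum_le_sum fun j _ => ?_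
  by_cases h : (⟨i, hi⟩ : Fin cs.length) = j
  · subst h; simp
  · simp only [h, if_false, add_zero]
    split_ifs <;> simp

theorem leavesBefore_add_le {t : PTree} {p : List ℕ} (h : IsInternalAt t p) :
    leavesBefore t p + numLeaves (subtree! t p) ≤ numLeaves t := by
  induction p generalizing t with
  | nil => simp [leavesBefore_nil]
  | cons i p ih =>
    obtain ⟨cs⟩ := t
    obtain ⟨hi, h⟩ := isInternalAt_cons.1 h
    rw [leavesBefore_cons hi, subtree!_cons hi]
    have := ih h
    have := leavesLeft_add_le hi
    omega

theorem IsSchroder.numLeaves_pos {t : PTree} (h : IsSchroder t) : 1 ≤ numLeaves t := by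
  induction h with
  | leaf => simp
  | node cs h2 h ih =>
    rw [numLeaves_node (by rintro rfl; simp at h2)]
    calc 1 ≤ numLeaves cs[(⟨0, by omega⟩ : Fin cs.length)] := ih _ (List.getElem_mem _)
      _ ≤ _ := Finset.single_le_sum (f := fun j : Fin cs.length => numLeaves cs[j])
        (fun _ _ => Nat.zero_le _) (Finset.mem_univ _)

theorem IsSchroder.length {cs : List PTree} (h : IsSchroder (PTree.node cs)) (h' : cs ≠ []) :
    2 ≤ cs.length := by
  cases h with
  | leaf => simp at h'
  | node _ h _ => exact h

theorem IsSchroder.child {cs : List PTree} (h : IsSchroder (PTree.node cs)) {i : ℕ}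
    (hi : i < cs.length) : IsSchroder cs[i] := by
  cases h with
  | leaf => simp at hi
  | node _ _ h => exact h _ (List.getElem_mem _)

theorem IsSchroder.subtree! {t : PTree} (h : IsSchroder t) {p : List ℕ} (hp : IsInternalAt t p) :
    IsSchroder (subtree! t p) := by
  induction p generalizing t with
  | nil => simpa
  | cons i p ih =>
    obtain ⟨cs⟩ := t
    obtain ⟨hi, hp⟩ := isInternalAt_cons.1 hp
    rw [subtree!_cons hi]
    exact ih (h.child hi) hp

theorem IsInternalAt.subtree!_ne_leaf {t : PTree} {p : List ℕ} (hp : IsInternalAt t p) :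
    subtree! t p ≠ leaf := by
  obtain ⟨cs, h, hcs⟩ := hp
  simp [PTree.subtree!, h, hcs]

-- Sectors

theorem sectorIn_cons {cs : List PTree} {i : ℕ} (hi : i < cs.length) (p : List ℕ) (s : ℕ) :
    SectorIn (node cs) (i :: p) s ↔
      leavesLeft cs i ≤ s ∧ SectorIn cs[i] p (s - leavesLeft cs i) := by
  unfold SectorIn
  rw [leavesBefore_cons hi, subtree!_cons hi]
  omega

theorem ownsSector_cons {cs : List PTree} {i : ℕ} (hi : i < cs.length) (p : List ℕ) (s : ℕ) :
    OwnsSector (node cs) (i :: p) s ↔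
      leavesLeft cs i ≤ s ∧ OwnsSector cs[i] p (s - leavesLeft cs i) := by
  unfold OwnsSector
  rw [sectorIn_cons hi, isInternalAt_cons]
  constructor
  · rintro ⟨⟨_, h1⟩, ⟨h2, h3⟩, h4⟩
    refine ⟨h2, h1, h3, fun w hw hpw hne hs => ?_⟩
    exact h4 (i :: w) (isInternalAt_cons.2 ⟨hi, hw⟩) (by simpa using hpw) (by simpa using hne)
      ((sectorIn_cons hi w s).2 ⟨h2, hs⟩)
  · rintro ⟨h2, h1, h3, h4⟩
    refine ⟨⟨hi, h1⟩, ⟨h2, h3⟩, fun w hw hpw hne hs => ?_⟩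
    cases w with
    | nil => simp at hpw
    | cons j w =>
      obtain ⟨rfl, hpw'⟩ := List.cons_prefix_cons.1 hpw
      obtain ⟨_, hw'⟩ := isInternalAt_cons.1 hw
      exact h4 w hw' hpw' (by simpa using hne) ((sectorIn_cons hi w s).1 hs).2

/-- The cut consisting of all the internal children of the root. -/
noncomputable def rootCut (cs : List PTree) : Finset (List ℕ) := by
  classical
  exact (Finset.univ.filter fun i : Fin cs.length => cs[i] ≠ leaf).image fun i => [i.1]

theorem mem_rootCut {cs : List PTree} {v : List ℕ} :
    v ∈ rootCut cs ↔ ∃ (i : ℕ) (hi : i < cs.length), cs[i] ≠ leaf ∧ v = [i] := by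
  simp only [rootCut, Finset.mem_image, Finset.mem_filter, Finset.mem_univ, true_and]
  constructor
  · rintro ⟨i, h, rfl⟩; exact ⟨i.1, i.2, h, rfl⟩
  · rintro ⟨i, hi, h, rfl⟩; exact ⟨⟨i, hi⟩, h, rfl⟩

theorem ownsSector_root_iff {cs : List PTree} (hcs : cs ≠ []) {s : ℕ}
    (hs : s < numSectors (node cs)) :
    OwnsSector (node cs) [] s ↔ ¬ RemovedIdx (node cs) (rootCut cs) s := by
  unfold OwnsSector RemovedIdx
  have h0 : SectorIn (node cs) [] s := by
    unfold SectorIn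
    rw [leavesBefore_nil, subtree!_nil]
    unfold numSectors at hs
    omega
  constructor
  · rintro ⟨_, _, h⟩ ⟨v, hv, h1, h2⟩
    obtain ⟨i, hi, hc, rfl⟩ := mem_rootCut.1 hv
    refine h [i] (isInternalAt_cons.2 ⟨hi, by simpa using hc⟩) List.nil_prefix (by simp) ⟨h1, ?_⟩
    unfold numSectors at h2
    omega
  · intro h
    refine ⟨by simpa using hcs, h0, fun w hw _ hne hsw => h ?_⟩
    cases w with
    | nil => simp at hne
    | cons i p =>
      obtain ⟨hi, hw⟩ := isInternalAt_cons.1 hw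
      have hc : cs[i] ≠ leaf := fun e => by rw [e] at hw; exact not_isInternalAt_leaf _ hw
      refine ⟨[i], mem_rootCut.2 ⟨i, hi, hc, rfl⟩, ?_⟩
      rw [sectorIn_cons hi] at hsw
      have := leavesBefore_add_le hw
      rw [leavesBefore_singleton hi, subtree!_cons hi, subtree!_nil]
      unfold SectorIn at hsw
      unfold numSectors
      omega

end PTree

section StrictMaps

/-- The number of maps `f : X → Fin k` with `f v < f w` whenever `r v w`. -/
noncomputable def strictCount {X : Type*} (r : X → X → Prop) (k : ℕ) : ℕ :=
  Nat.card {f : X → Fin k // ∀ v w, r v w → f v < f w}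

/-- The number of surjective maps `f : X → Fin k` with `f v < f w` whenever `r v w`. -/
noncomputable def strictSurjCount {X : Type*} (r : X → X → Prop) (k : ℕ) : ℕ :=
  Nat.card {f : X → Fin k // Function.Surjective f ∧ ∀ v w, r v w → f v < f w}

theorem strictCount_congr {X Y : Type*} (e : X ≃ Y) {r : X → X → Prop} {s : Y → Y → Prop}
    (h : ∀ v w, r v w ↔ s (e v) (e w)) (k : ℕ) : strictCount r k = strictCount s k := by
  refine Nat.card_congr ((e.arrowCongr (Equiv.refl (Fin k))).subtypeEquiv fun f => ?_)
  constructor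
  · intro hf v w hvw
    have := hf (e.symm v) (e.symm w) (by rw [h]; simpa using hvw)
    simpa using this
  · intro hf v w hvw
    have := hf (e v) (e w) ((h _ _).1 hvw)
    simpa using this

theorem strictCount_sigma {ι : Type*} [Fintype ι] {X : ι → Type*}
    (r : (Σ i, X i) → (Σ i, X i) → Prop) (s : ∀ i, X i → X i → Prop)
    (h : ∀ i x y, r ⟨i, x⟩ ⟨i, y⟩ ↔ s i x y) (h' : ∀ i j x y, r ⟨i, x⟩ ⟨j, y⟩ → i = j) (k : ℕ) :
    strictCount r k = ∏ i, strictCount (s i) k := by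
  unfold strictCount
  rw [← Nat.card_pi]
  refine Nat.card_congr
    { toFun := fun f i => ⟨fun x => f.1 ⟨i, x⟩, fun v w hvw => f.2 _ _ ((h i v w).2 hvw)⟩
      invFun := fun g => ⟨fun x => (g x.1).1 x.2, ?_⟩
      left_inv := fun f => rfl
      right_inv := fun g => rfl }
  rintro ⟨i, v⟩ ⟨j, w⟩ hvw
  obtain rfl := h' _ _ _ _ hvw
  exact (g i).2 _ _ ((h i v w).1 hvw)

theorem strictCount_option_succ {Y : Type*} [Finite Y] (r : Option Y → Option Y → Prop)
    (h : ∀ y, r none (some y)) (h' : ∀ x, ¬ r x none) (k : ℕ) :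
    strictCount r (k + 1) =
      strictCount r k + strictCount (fun x y => r (some x) (some y)) k := by
  classical
  unfold strictCount
  rw [← Nat.card_sum]
  symm
  have hsucc : ∀ (f : Option Y → Fin k), (∀ v w, r v w → f v < f w) →
      ∀ v w, r v w → (f v).succ < (f w).succ := fun f hf v w hvw =>
    Fin.succ_lt_succ_iff.2 (hf v w hvw)
  have hroot : ∀ (g : Y → Fin k), (∀ v w, r (some v) (some w) → g v < g w) →
      ∀ v w, r v w → (v.elim 0 fun y => (g y).succ : Fin (k + 1)) <
        (w.elim 0 fun y => (g y).succ : Fin (k + 1)) := by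
    intro g hg v w hvw
    rcases w with _ | w
    · exact absurd hvw (h' v)
    · rcases v with _ | v
      · exact Fin.succ_pos _
      · exact Fin.succ_lt_succ_iff.2 (hg v w hvw)
  refine Nat.card_congr (Equiv.ofBijective
    (fun s => Sum.elim
      (fun f : {f : Option Y → Fin k // ∀ v w, r v w → f v < f w} =>
        (⟨fun x => (f.1 x).succ, hsucc f.1 f.2⟩ :
          {f : Option Y → Fin (k + 1) // ∀ v w, r v w → f v < f w}))
      (fun g : {g : Y → Fin k // ∀ v w, r (some v) (some w) → g v < g w} =>
        ⟨fun x => x.elim 0 fun y => (g.1 y).succ, hroot g.1 g.2⟩) s) ⟨?_, ?_⟩)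
  · rintro (f | f) (g | g) hfg
    · simp only [Sum.elim_inl, Subtype.mk.injEq] at hfg
      congr 1
      ext x : 2
      exact Fin.succ_injective _ (congrFun hfg x)
    · simp only [Sum.elim_inl, Sum.elim_inr, Subtype.mk.injEq] at hfg
      exact absurd (congrFun hfg none) (Fin.succ_ne_zero _)
    · simp only [Sum.elim_inl, Sum.elim_inr, Subtype.mk.injEq] at hfg
      exact absurd (congrFun hfg none).symm (Fin.succ_ne_zero _)
    · simp only [Sum.elim_inr, Subtype.mk.injEq] at hfg
      congr 1
      ext x : 2
      exact Fin.succ_injective _ (congrFun hfg (some x))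
  · rintro ⟨f, hf⟩
    have hne : ∀ y, f (some y) ≠ 0 := fun y hy => by
      have := hf _ _ (h y)
      rw [hy] at this
      exact absurd this (Fin.not_lt_zero _)
    by_cases h0 : f none = 0
    · refine ⟨Sum.inr ⟨fun y => (f (some y)).pred (hne y), fun v w hvw => ?_⟩, ?_⟩
      · exact Fin.pred_lt_pred_iff.2 (hf _ _ hvw)
      · ext x : 2
        rcases x with _ | x
        · simp [h0]
        · simp
    · have hne' : ∀ x, f x ≠ 0 := fun x => by
        rcases x with _ | x
        · exact h0
        · exact hne x
      refine ⟨Sum.inl ⟨fun y => (f y).pred (hne' y), fun v w hvw => ?_⟩, ?_⟩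
      · exact Fin.pred_lt_pred_iff.2 (hf _ _ hvw)
      · ext x : 2
        simp

theorem card_strict_range_eq {X : Type*} [Finite X] (r : X → X → Prop) (k : ℕ)
    (S : Finset (Fin k)) :
    Nat.card {f : {f : X → Fin k // ∀ v w, r v w → f v < f w} // Set.range f.1 = S} =
      strictSurjCount r S.card := by
  symm
  let e := S.orderIsoOfFin rfl
  refine Nat.card_congr (Equiv.ofBijective
    (fun f => ⟨⟨fun x => (e (f.1 x) : Fin k), fun v w hvw => ?_⟩, ?_⟩) ⟨?_, ?_⟩)
  · exact e.strictMono (f.2.2 v w hvw)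
  · ext y
    constructor
    · rintro ⟨x, rfl⟩
      exact (e (f.1 x)).2
    · intro hy
      obtain ⟨x, hx⟩ := f.2.1 (e.symm ⟨y, hy⟩)
      exact ⟨x, by simp [hx]⟩
  · intro f g hfg
    ext x : 2
    have := congrFun (congrArg (fun q => q.1.1) hfg) x
    exact e.injective (Subtype.ext this)
  · rintro ⟨⟨f, hf⟩, hS⟩
    have hmem : ∀ x, f x ∈ S := fun x => by
      have : f x ∈ (S : Set (Fin k)) := hS ▸ Set.mem_range_self x
      exact this
    refine ⟨⟨fun x => e.symm ⟨f x, hmem x⟩, ?_, ?_⟩, ?_⟩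
    · intro j
      have : (e j : Fin k) ∈ Set.range f := by rw [hS]; exact (e j).2
      obtain ⟨x, hx⟩ := this
      refine ⟨x, ?_⟩
      rw [OrderIso.symm_apply_eq]
      exact Subtype.ext hx
    · intro v w hvw
      exact e.symm.strictMono (hf v w hvw)
    · ext x : 4
      simp

theorem strictCount_eq_sum_choose {X : Type*} [Finite X] (r : X → X → Prop) (k : ℕ) :
    strictCount r k = ∑ j ∈ Finset.range (k + 1), k.choose j * strictSurjCount r j := by
  classical
  have hfib : ∀ f : {f : X → Fin k // ∀ v w, r v w → f v < f w}, ∀ S : Finset (Fin k),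
      (Set.toFinite (Set.range f.1)).toFinset = S ↔ Set.range f.1 = S := fun f S => by
    rw [← Finset.coe_inj, Set.Finite.coe_toFinset]
  unfold strictCount
  rw [Nat.card_congr (Equiv.sigmaFiberEquiv
    (fun f : {f : X → Fin k // ∀ v w, r v w → f v < f w} =>
      (Set.toFinite (Set.range f.1)).toFinset)).symm, Nat.card_sigma]
  simp_rw [hfib, card_strict_range_eq]
  have := Finset.sum_powerset_apply_card (fun j => strictSurjCount r j)
    (x := (Finset.univ : Finset (Fin k)))
  simpa using this

theorem eq_of_binomial_sum_eq {R : Type*} [Ring R] {a b : ℕ → R}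
    (h : ∀ k, ∑ j ∈ Finset.range (k + 1), (k.choose j : R) * a j =
      ∑ j ∈ Finset.range (k + 1), (k.choose j : R) * b j) (k : ℕ) : a k = b k := by
  induction k using Nat.strong_induction_on with
  | _ k ih =>
    have hk := h k
    rw [Finset.sum_range_succ, Finset.sum_range_succ,
      Finset.sum_congr rfl fun j hj => by rw [ih j (Finset.mem_range.1 hj)]] at hk
    simpa using hk

end StrictMaps

namespace PTree

-- Recursion over the children of the root

/-- The internal vertices of `node cs` are the root and the internal vertices of the children. -/
def internalEquiv {cs : List PTree} (hcs : cs ≠ []) :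
    {p // IsInternalAt (node cs) p} ≃ Option (Σ i : Fin cs.length, {p // IsInternalAt cs[i] p}) where
  toFun
    | ⟨[], _⟩ => none
    | ⟨i :: p, hp⟩ => some ⟨⟨i, (isInternalAt_cons.1 hp).1⟩, ⟨p, (isInternalAt_cons.1 hp).2⟩⟩
  invFun
    | none => ⟨[], by simpa using hcs⟩
    | some x => ⟨x.1.1 :: x.2.1, isInternalAt_cons.2 ⟨x.1.2, x.2.2⟩⟩
  left_inv
    | ⟨[], _⟩ => rfl
    | ⟨_ :: _, _⟩ => rfl
  right_inv
    | none => rfl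
    | some _ => rfl

/-- The strict order of the skeleton: `v` is a proper ancestor of `w`. -/
def ProperAncestor (t : PTree) (v w : {p // IsInternalAt t p}) : Prop := v.1 <+: w.1 ∧ v ≠ w

theorem omegaSkK_eq_strictSurjCount (t : PTree) (k : ℕ) :
    omegaSkK t k = strictSurjCount (ProperAncestor t) k :=
  Nat.card_congr (Equiv.subtypeEquivRight fun f => by simp [ProperAncestor])

theorem strictCount_leaf (k : ℕ) : strictCount (ProperAncestor leaf) k = 1 := by
  have : IsEmpty {p // IsInternalAt leaf p} := ⟨fun p => not_isInternalAt_leaf _ p.2⟩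
  rw [strictCount, Nat.card_eq_one_iff_unique]
  exact ⟨inferInstance, ⟨⟨fun x => isEmptyElim x, fun v => isEmptyElim v⟩⟩⟩

theorem strictCount_node_zero {cs : List PTree} (hcs : cs ≠ []) :
    strictCount (ProperAncestor (node cs)) 0 = 0 := by
  have : IsEmpty {f : {p // IsInternalAt (node cs) p} → Fin 0 //
      ∀ v w, ProperAncestor (node cs) v w → f v < f w} :=
    ⟨fun f => (f.1 ((internalEquiv hcs).symm none)).elim0⟩
  exact Nat.card_of_isEmpty

theorem strictCount_node_succ {cs : List PTree} (hcs : cs ≠ []) (k : ℕ) :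
    strictCount (ProperAncestor (node cs)) (k + 1) =
      strictCount (ProperAncestor (node cs)) k +
        ∏ i : Fin cs.length, strictCount (ProperAncestor cs[i]) k := by
  let e := internalEquiv hcs
  let r : Option (Σ i : Fin cs.length, {p // IsInternalAt cs[i] p}) →
      Option (Σ i : Fin cs.length, {p // IsInternalAt cs[i] p}) → Prop :=
    fun x y => ProperAncestor (node cs) (e.symm x) (e.symm y)
  have hr : ∀ k, strictCount (ProperAncestor (node cs)) k = strictCount r k := fun k =>
    strictCount_congr e (fun v w => by simp [r]) k
  rw [hr, hr, strictCount_option_succ]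
  · congr 1
    refine strictCount_sigma _ (fun i => ProperAncestor cs[i]) ?_ ?_ k
    · intro i x y
      simp only [r, ProperAncestor, ne_eq, EmbeddingLike.apply_eq_iff_eq, Option.some.injEq,
        Sigma.mk.injEq, heq_eq_eq, true_and]
      simp [e, internalEquiv]
    · rintro i j x y ⟨h, -⟩
      exact Fin.ext (List.cons_prefix_cons.1 h).1
  · intro y
    exact ⟨List.nil_prefix, by simp⟩
  · rintro x ⟨h, h'⟩
    exact h' (Subtype.ext (List.prefix_nil.1 h))

variable {A : Type*}

/-- The subword of `w` decorating the `i`-th child of the root of `node cs`. -/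
noncomputable def childWord (cs : List PTree) (w : List A) (i : Fin cs.length) : List A :=
  (w.drop (leavesLeft cs i)).take (numSectors cs[i])

open Classical in
/-- The letters of `w` decorating the sectors owned by `v`. -/
noncomputable def blockWord [Zero A] (t : PTree) (w : List A) (v : List ℕ) : List A :=
  ((List.range w.length).filter fun i => OwnsSector t v i).map fun i => w.getD i 0

theorem phiPi_eq_prod [Ring A] (φ : A → ℂ) (t : PTree) (w : List A)
    [Fintype {p // IsInternalAt t p}] :
    phiPi φ t w = ∏ v : {p // IsInternalAt t p}, φ (blockWord t w v).prod := by
  rw [← finprod_eq_prod_of_fintype]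
  exact (finprod_set_coe_eq_finprod_mem {v | IsInternalAt t v}
    (f := fun v => φ (blockWord t w v).prod)).symm

theorem phiPi_leaf [Ring A] (φ : A → ℂ) (w : List A) : phiPi φ leaf w = 1 := by
  have : IsEmpty {p // IsInternalAt leaf p} := ⟨fun p => not_isInternalAt_leaf _ p.2⟩
  have := Fintype.ofFinite {p // IsInternalAt leaf p}
  rw [phiPi_eq_prod]
  simp

theorem filter_range_map_getD [Zero A] (w : List A) (a m : ℕ) (h : a + m ≤ w.length)
    (P Q : ℕ → Prop) [DecidablePred P] [DecidablePred Q]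
    (hP : ∀ s, P s ↔ a ≤ s ∧ Q (s - a)) (hQ : ∀ s, Q s → s < m) :
    ((List.range w.length).filter fun i => P i).map (fun i => w.getD i 0) =
      ((List.range ((w.drop a).take m).length).filter fun i => Q i).map
        fun i => ((w.drop a).take m).getD i 0 := by
  have hl : ((w.drop a).take m).length = m := by simp; omega
  obtain ⟨b, hb⟩ := Nat.exists_eq_add_of_le h
  have h1 : (List.range a).filter (fun i => decide (P i)) = [] := by
    rw [List.filter_eq_nil_iff]
    intro s hs
    rw [List.mem_range] at hs
    simp [hP]; omega
  have h3 : ((List.range b).map (a + m + ·)).filter (fun i => decide (P i)) = [] := by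
    rw [List.filter_eq_nil_iff]
    intro s hs
    obtain ⟨s, -, rfl⟩ := List.mem_map.1 hs
    simp only [hP, decide_eq_true_eq]
    rintro ⟨-, hq⟩
    have := hQ _ hq
    omega
  rw [hl, hb, List.range_add, List.range_add, List.filter_append, List.filter_append, h1, h3,
    List.nil_append, List.append_nil, List.filter_map, List.map_map]
  have h2 : ((fun i => decide (P i)) ∘ fun x => a + x) = fun i => decide (Q i) := by
    funext s
    simp [hP]
  rw [h2]
  refine List.map_congr_left fun s hs => ?_
  have hs' : s < m := by
    have := (List.mem_filter.1 hs).1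
    simpa using this
  simp [List.getD_eq_getElem?_getD, hs', List.getElem?_drop]

theorem blockWord_cons [Zero A] {cs : List PTree} {w : List A} (i : Fin cs.length)
    (h : leavesLeft cs i + numSectors cs[i] ≤ w.length) (p : List ℕ) :
    blockWord (node cs) w (i.1 :: p) = blockWord cs[i] (childWord cs w i) p := by
  classical
  unfold blockWord childWord
  refine filter_range_map_getD w _ _ h _ _ (fun s => ownsSector_cons i.2 p s) fun s hs => ?_
  have := leavesBefore_add_le hs.1
  have := hs.2.1
  unfold SectorIn at this
  unfold numSectors
  omega

theorem leavesLeft_add_numSectors_le {cs : List PTree} (h : IsSchroder (node cs))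
    (i : Fin cs.length) : leavesLeft cs i + numSectors cs[i] ≤ numSectors (node cs) := by
  have h1 := leavesLeft_add_le i.2
  have h2 : 1 ≤ numLeaves cs[i] := (h.child i.2).numLeaves_pos
  unfold numSectors
  change leavesLeft cs i + numLeaves cs[i] ≤ _ at h1
  omega

theorem phiPi_node [Ring A] (φ : A → ℂ) {cs : List PTree} (hcs : cs ≠ []) {w : List A}
    (h : IsSchroder (node cs)) (hw : w.length = numSectors (node cs)) :
    phiPi φ (node cs) w = φ (blockWord (node cs) w []).prod *
      ∏ i : Fin cs.length, phiPi φ cs[i] (childWord cs w i) := by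
  have := fun t : PTree => Fintype.ofFinite {p // IsInternalAt t p}
  rw [phiPi_eq_prod, ← Equiv.prod_comp (internalEquiv hcs).symm, Fintype.prod_option,
    Fintype.prod_sigma]
  congr 1
  refine Finset.prod_congr rfl fun i _ => ?_
  rw [phiPi_eq_prod]
  refine Finset.prod_congr rfl fun p _ => ?_
  rw [← blockWord_cons i (hw ▸ leavesLeft_add_numSectors_le h i)]
  rfl

theorem trunkWord_rootCut [Zero A] {cs : List PTree} (hcs : cs ≠ []) {w : List A}
    (hw : w.length = numSectors (node cs)) :
    trunkWord (node cs) (rootCut cs) w = blockWord (node cs) w [] := by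
  unfold trunkWord blockWord
  congr 1
  refine List.filter_congr fun s hs => ?_
  rw [List.mem_range, hw] at hs
  exact decide_eq_decide.2 (ownsSector_root_iff hcs hs).symm

-- Trunks

theorem replaceLeaf_eq_leaf {p : List ℕ} {t : PTree} :
    replaceLeaf p t = leaf ↔ t = leaf ∨ p = [] := by
  obtain ⟨cs⟩ := t
  cases p <;> simp [replaceLeaf]

theorem foldl_replaceLeaf (L : List (List ℕ)) (hL : [] ∉ L) (cs : List PTree) :
    ∃ cs', L.foldl (fun s v => replaceLeaf v s) (node cs) = node cs' ∧
      cs'.length = cs.length ∧ ∀ i < cs.length,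
        (cs'.getD i leaf = leaf ↔ cs.getD i leaf = leaf ∨ [i] ∈ L) := by
  induction L generalizing cs with
  | nil => exact ⟨cs, rfl, rfl, by simp⟩
  | cons v L ih =>
    cases v with
    | nil => simp at hL
    | cons j p =>
      obtain ⟨cs', h1, h2, h3⟩ := ih (fun h => hL (List.mem_cons_of_mem _ h))
        (cs.set j (replaceLeaf p (cs.getD j leaf)))
      rw [List.length_set] at h2 h3
      refine ⟨cs', h1, h2, fun i hi => ?_⟩
      rw [h3 i hi]
      by_cases hij : j = i
      · subst hij
        have : (cs.set j (replaceLeaf p (cs.getD j leaf))).getD j leaf =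
            replaceLeaf p (cs.getD j leaf) := by
          simp [List.getD_eq_getElem?_getD, hi]
        rw [this, replaceLeaf_eq_leaf]
        simp [or_assoc, eq_comm]
      · have : (cs.set j (replaceLeaf p (cs.getD j leaf))).getD i leaf = cs.getD i leaf := by
          simp [List.getD_eq_getElem?_getD, List.getElem?_set_ne hij]
        rw [this]
        simp [Ne.symm hij]

theorem sortCut_perm (t : PTree) (c : Finset (List ℕ)) : (sortCut t c).Perm c.toList :=
  List.mergeSort_perm _ _

theorem mem_sortCut {t : PTree} {c : Finset (List ℕ)} {v : List ℕ} :
    v ∈ sortCut t c ↔ v ∈ c := by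
  rw [(sortCut_perm t c).mem_iff, Finset.mem_toList]

theorem sortCut_root (t : PTree) : sortCut t {[]} = [[]] := by
  simp [sortCut]

theorem trunkTree_root (t : PTree) : trunkTree t {[]} = leaf := by
  simp [trunkTree, sortCut_root, replaceLeaf]

theorem exists_trunkTree_eq {cs : List PTree} {c : Finset (List ℕ)} (hc : [] ∉ c) :
    ∃ cs', trunkTree (node cs) c = node cs' ∧ cs'.length = cs.length ∧ ∀ i < cs.length,
      (cs'.getD i leaf = leaf ↔ cs.getD i leaf = leaf ∨ [i] ∈ c) := by
  obtain ⟨cs', h1, h2, h3⟩ := foldl_replaceLeaf (sortCut (node cs) c)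
    (by rwa [mem_sortCut]) cs
  exact ⟨cs', h1, h2, by simpa only [mem_sortCut] using h3⟩

theorem trunkTree_ne_leaf {cs : List PTree} (hcs : cs ≠ []) {c : Finset (List ℕ)}
    (hc : [] ∉ c) : trunkTree (node cs) c ≠ leaf := by
  obtain ⟨cs', h1, h2, -⟩ := exists_trunkTree_eq (cs := cs) hc
  rw [h1, ne_leaf_iff]
  rintro rfl
  exact hcs (List.length_eq_zero_iff.1 h2.symm)

theorem isCorolla_node {cs : List PTree} :
    IsCorolla (node cs) ↔ 2 ≤ cs.length ∧ ∀ i < cs.length, cs.getD i leaf = leaf := by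
  have h : ∀ m, node cs = corolla m ↔ cs.length = m ∧ ∀ i < cs.length, cs.getD i leaf = leaf := by
    intro m
    rw [corolla, PTree.node.injEq, List.eq_replicate_iff]
    refine and_congr_right fun _ => ?_
    rw [List.forall_mem_iff_forall_getElem]
    exact forall₂_congr fun i hi => by simp [List.getD_eq_getElem?_getD, hi]
  unfold IsCorolla
  simp_rw [h]
  constructor
  · rintro ⟨m, h1, h2, h3⟩
    exact ⟨h2 ▸ h1, h3⟩
  · rintro ⟨h1, h2⟩
    exact ⟨_, h1, rfl, h2⟩

theorem isCorolla_trunkTree {cs : List PTree} (h : IsSchroder (node cs)) (hcs : cs ≠ [])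
    {c : Finset (List ℕ)} (hc : [] ∉ c) :
    IsCorolla (trunkTree (node cs) c) ↔ ∀ (i) (hi : i < cs.length), cs[i] ≠ leaf → [i] ∈ c := by
  obtain ⟨cs', h1, h2, h3⟩ := exists_trunkTree_eq (cs := cs) hc
  rw [h1, isCorolla_node, h2, and_iff_right (h.length hcs)]
  refine forall₂_congr fun i hi => ?_
  rw [h3 i hi, List.getD_eq_getElem?_getD, List.getElem?_eq_getElem hi, Option.getD_some,
    or_iff_not_imp_left]

theorem nil_notMem_rootCut (cs : List PTree) : [] ∉ rootCut cs := by
  simp [mem_rootCut]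

theorem root_mem_cutsFinset {cs : List PTree} (hcs : cs ≠ []) :
    {[]} ∈ cutsFinset (node cs) := by
  rw [mem_cutsFinset]
  simpa using hcs

theorem rootCut_mem_cutsFinset (cs : List PTree) : rootCut cs ∈ cutsFinset (node cs) := by
  rw [mem_cutsFinset]
  constructor
  · intro v hv
    obtain ⟨i, hi, hc, rfl⟩ := mem_rootCut.1 hv
    exact isInternalAt_cons.2 ⟨hi, by simpa using hc⟩
  · intro v hv w hw hne hp
    obtain ⟨i, hi, -, rfl⟩ := mem_rootCut.1 hv
    obtain ⟨j, hj, -, rfl⟩ := mem_rootCut.1 hw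
    simp at hp hne
    omega

theorem nil_notMem_of_mem_cutsFinset {t : PTree} {c : Finset (List ℕ)} (hc : c ∈ cutsFinset t)
    (h : c ≠ {[]}) : [] ∉ c := by
  intro h0
  refine h (Finset.eq_singleton_iff_unique_mem.2 ⟨h0, fun v hv => ?_⟩)
  by_contra hv0
  exact (mem_cutsFinset.1 hc).2 [] h0 v hv (Ne.symm hv0) List.nil_prefix

theorem eq_rootCut {cs : List PTree} {c : Finset (List ℕ)} (hc : c ∈ cutsFinset (node cs))
    (h0 : [] ∉ c) (h : ∀ (i) (hi : i < cs.length), cs[i] ≠ leaf → [i] ∈ c) : c = rootCut cs := by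
  rw [mem_cutsFinset] at hc
  ext v
  rw [mem_rootCut]
  constructor
  · intro hv
    cases v with
    | nil => exact absurd hv h0
    | cons i p =>
      obtain ⟨hi, hp⟩ := isInternalAt_cons.1 (hc.1 _ hv)
      have hne : cs[i] ≠ leaf := fun e => not_isInternalAt_leaf p (e ▸ hp)
      refine ⟨i, hi, hne, ?_⟩
      by_contra hvi
      exact hc.2 _ (h i hi hne) _ hv (Ne.symm hvi) (by simp)
  · rintro ⟨i, hi, hne, rfl⟩
    exact h i hi hne

end PTree

namespace PTree

variable {A : Type*}

-- Convolution of functionals on decorated forests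

/-- Unital multiplicative functionals on decorated forests. -/
structure IsMultiplicative (f : DForest A → ℂ) : Prop where
  map_nil : f [] = 1
  map_append : ∀ F G, f (F ++ G) = f F * f G

theorem IsMultiplicative.eq_prod {f : DForest A → ℂ} (hf : IsMultiplicative f) (F : DForest A) :
    f F = (F.map fun d => f [d]).prod := by
  induction F with
  | nil => simp [hf.map_nil]
  | cons d F ih => rw [← List.singleton_append, hf.map_append, ih]; simp

theorem isMultiplicative_epsD : IsMultiplicative (epsD (A := A)) :=
  ⟨by simp [epsD], fun F G => by by_cases hF : F = [] <;> simp [epsD, hF]⟩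

theorem isMultiplicative_charD [Ring A] (φ : A → ℂ) : IsMultiplicative (charD φ) :=
  ⟨by simp [charD], fun F G => by simp [charD]⟩

theorem convD_nil [Zero A] (f g : DForest A → ℂ) : convD f g [] = f [] * g [] := by
  simp [convD, forestSplits]

theorem convD_cons [Zero A] (f g : DForest A → ℂ) (d : PTree × List A) (F : DForest A) :
    convD f g (d :: F) = ∑ c ∈ cutsFinset d.1,
      convD (fun G => f (trunkPart d c ++ G)) (fun G => g (prunePart d c ++ G)) F := by
  simp only [convD, forestSplits, List.map_flatMap, List.map_map]
  rw [List.flatMap, List.sum_flatten, List.map_map, ← Finset.sum_map_toList]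
  rfl

theorem convD_const_mul [Zero A] (f g : DForest A → ℂ) (a b : ℂ) (F : DForest A) :
    convD (fun G => a * f G) (fun G => b * g G) F = a * b * convD f g F := by
  unfold convD
  rw [← List.sum_map_mul_left]
  congr 1
  exact List.map_congr_left fun pr _ => by ring

theorem IsMultiplicative.convD_cons [Zero A] {f g : DForest A → ℂ} (hf : IsMultiplicative f)
    (hg : IsMultiplicative g) (d : PTree × List A) (F : DForest A) :
    convD f g (d :: F) =
      (∑ c ∈ cutsFinset d.1, f (trunkPart d c) * g (prunePart d c)) * convD f g F := by
  rw [PTree.convD_cons, Finset.sum_mul]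
  refine Finset.sum_congr rfl fun c _ => ?_
  simp_rw [hf.map_append, hg.map_append, convD_const_mul]

theorem IsMultiplicative.convD [Zero A] {f g : DForest A → ℂ} (hf : IsMultiplicative f)
    (hg : IsMultiplicative g) : IsMultiplicative (convD f g) := by
  refine ⟨by simp [convD_nil, hf.map_nil, hg.map_nil], fun F G => ?_⟩
  induction F with
  | nil => simp [convD_nil, hf.map_nil, hg.map_nil]
  | cons d F ih => rw [List.cons_append, hf.convD_cons hg, hf.convD_cons hg, ih, mul_assoc]

theorem IsMultiplicative.convPowD [Zero A] {f : DForest A → ℂ} (hf : IsMultiplicative f) (k : ℕ) :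
    IsMultiplicative (convPowD f k) := by
  induction k with
  | zero => exact isMultiplicative_epsD
  | succ k ih => exact hf.convD ih

theorem goodForest_cons {d : PTree × List A} {F : DForest A} :
    GoodForest (d :: F) ↔ GoodTree d ∧ GoodForest F := by
  simp [GoodForest]

theorem goodForest_append {F G : DForest A} :
    GoodForest (F ++ G) ↔ GoodForest F ∧ GoodForest G := by
  simp [GoodForest, or_imp, forall_and]

theorem goodForest_prunePart {d : PTree × List A} (hd : GoodTree d) {c : Finset (List ℕ)}
    (hc : c ∈ cutsFinset d.1) : GoodForest (prunePart d c) := by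
  intro e he
  obtain ⟨v, hv, rfl⟩ := List.mem_map.1 he
  have hv' := (mem_cutsFinset.1 hc).1 v (mem_sortCut.1 hv)
  refine ⟨hd.1.subtree! hv', hv'.subtree!_ne_leaf, ?_⟩
  have h1 := leavesBefore_add_le hv'
  have h2 := (hd.1.subtree! hv').numLeaves_pos
  have h3 := hd.2.2
  unfold numSectors at h3 ⊢
  simp only [List.length_take, List.length_drop]
  omega

theorem goodForest_of_mem_forestSplits [Zero A] {F : DForest A} (hF : GoodForest F)
    {pr : DForest A × DForest A} (h : pr ∈ forestSplits F) : GoodForest pr.2 := by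
  induction F generalizing pr with
  | nil =>
    simp only [forestSplits, List.mem_singleton] at h
    subst h
    exact hF
  | cons d F ih =>
    rw [goodForest_cons] at hF
    simp only [forestSplits, List.mem_flatMap, Finset.mem_toList, List.mem_map] at h
    obtain ⟨c, hc, qr, hqr, rfl⟩ := h
    exact goodForest_append.2 ⟨goodForest_prunePart hF.1 hc, ih hF.2 hqr⟩

theorem convD_congr_right [Zero A] (f : DForest A → ℂ) {g h : DForest A → ℂ}
    (hgh : ∀ G, GoodForest G → g G = h G) {F : DForest A} (hF : GoodForest F) :
    convD f g F = convD f h F := by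
  unfold convD
  congr 1
  exact List.map_congr_left fun pr hpr => by rw [hgh _ (goodForest_of_mem_forestSplits hF hpr)]

theorem convD_sum_right [Zero A] {ι : Type*} (f : DForest A → ℂ) (s : Finset ι) (a : ι → ℂ)
    (g : ι → DForest A → ℂ) (F : DForest A) :
    convD f (fun G => ∑ j ∈ s, a j * g j G) F = ∑ j ∈ s, a j * convD f (g j) F := by
  unfold convD
  simp_rw [← List.sum_map_mul_left]
  induction forestSplits F with
  | nil => simp
  | cons pr L ih =>
    simp only [List.map_cons, List.sum_cons, ih, Finset.sum_add_distrib]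
    rw [Finset.mul_sum]
    congr 1
    exact Finset.sum_congr rfl fun j _ => by ring

theorem convD_add_left [Zero A] (f f' g : DForest A → ℂ) (F : DForest A) :
    convD (fun G => f G + f' G) g F = convD f g F + convD f' g F := by
  unfold convD
  rw [← List.sum_map_add]
  simp_rw [add_mul]

theorem prunePart_root {d : PTree × List A} (hd : GoodTree d) : prunePart d {[]} = [d] := by
  simp [prunePart, sortCut_root, leavesBefore_nil, ← hd.2.2]

theorem trunkPart_root [Zero A] (d : PTree × List A) : trunkPart d {[]} = [] := by
  simp [trunkPart, trunkTree_root]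

theorem trunkPart_of_nil_notMem [Zero A] {cs : List PTree} (hcs : cs ≠ []) (w : List A)
    {c : Finset (List ℕ)} (hc : [] ∉ c) :
    trunkPart (node cs, w) c = [(trunkTree (node cs) c, trunkWord (node cs) c w)] := by
  simp [trunkPart, trunkTree_ne_leaf hcs hc]

theorem convD_epsD [Zero A] (g : DForest A → ℂ) {F : DForest A} (hF : GoodForest F) :
    convD epsD g F = g F := by
  induction F generalizing g with
  | nil => simp [convD_nil, isMultiplicative_epsD.map_nil]
  | cons d F ih =>
    rw [goodForest_cons] at hF
    rw [convD_cons]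
    obtain ⟨⟨cs⟩, w⟩ := d
    have hcs : cs ≠ [] := ne_leaf_iff.1 hF.1.2.1
    rw [Finset.sum_eq_single_of_mem {[]} (root_mem_cutsFinset hcs)]
    · simp only [trunkPart_root, prunePart_root hF.1, List.nil_append]
      exact ih _ hF.2
    · intro c hc hne
      rw [trunkPart_of_nil_notMem hcs w (nil_notMem_of_mem_cutsFinset hc hne)]
      simp [convD, epsD]

theorem convPowD_charD_eq_sum_choose [Ring A] (φ : A → ℂ) (k : ℕ) {F : DForest A}
    (hF : GoodForest F) : convPowD (charD φ) k F =
      ∑ j ∈ Finset.range (k + 1), (k.choose j : ℂ) * convPowD (charHatD φ) j F := by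
  induction k generalizing F with
  | zero => simp [convPowD]
  | succ k ih =>
    have hchar : charD φ = fun G => charHatD φ G + epsD G := by
      funext G
      simp [charHatD]
    rw [convPowD, convD_congr_right _ (fun G hG => ih hG) hF, convD_sum_right]
    conv_lhs =>
      enter [2, j]
      rw [hchar, convD_add_left, convD_epsD _ hF, ← convPowD, mul_add]
    rw [Finset.sum_add_distrib, Finset.sum_range_succ' _ (k + 1)]
    simp_rw [Nat.choose_succ_succ, Nat.cast_add, add_mul]
    rw [Finset.sum_add_distrib, add_assoc]
    congr 1
    rw [Finset.sum_range_succ' _ k, Finset.sum_range_succ _ k]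
    simp

open Classical in
theorem sum_cuts_charD [Ring A] (φ : A → ℂ) {g : DForest A → ℂ} (hg : IsMultiplicative g)
    {cs : List PTree} {w : List A} (hd : GoodTree (node cs, w)) :
    ∑ c ∈ cutsFinset (node cs), charD φ (trunkPart (node cs, w) c) * g (prunePart (node cs, w) c) =
      g [(node cs, w)] + φ (blockWord (node cs) w []).prod *
        ∏ i : Fin cs.length, if cs[i] = leaf then 1 else g [(cs[i], childWord cs w i)] := by
  have hcs : cs ≠ [] := ne_leaf_iff.1 hd.2.1
  have hne : ({[]} : Finset (List ℕ)) ≠ rootCut cs := fun h =>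
    nil_notMem_rootCut cs (h ▸ Finset.mem_singleton_self _)
  have hsub : {{[]}, rootCut cs} ⊆ cutsFinset (node cs) := by
    rw [Finset.insert_subset_iff, Finset.singleton_subset_iff]
    exact ⟨root_mem_cutsFinset hcs, rootCut_mem_cutsFinset cs⟩
  rw [← Finset.sum_subset hsub, Finset.sum_pair hne]
  · congr 1
    · rw [trunkPart_root, prunePart_root hd, (isMultiplicative_charD φ).map_nil, one_mul]
    · congr 1
      · rw [trunkPart_of_nil_notMem hcs w (nil_notMem_rootCut cs), trunkWord_rootCut hcs hd.2.2]
        have : IsCorolla (trunkTree (node cs) (rootCut cs)) :=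
          (isCorolla_trunkTree hd.1 hcs (nil_notMem_rootCut cs)).2 fun i hi h =>
            mem_rootCut.2 ⟨i, hi, h, rfl⟩
        simp [charD, this]
      · rw [hg.eq_prod, prunePart, List.map_map, ((sortCut_perm _ _).map _).prod_eq,
          Finset.prod_map_toList]
        unfold rootCut
        rw [Finset.prod_image fun i _ j _ h => Fin.ext (by simpa using h), Finset.prod_filter]
        refine Finset.prod_congr rfl fun i _ => ?_
        by_cases hi : cs[i] = leaf
        · simp [hi]
        · rw [if_pos hi, if_neg hi]
          simp only [Function.comp_apply]
          rw [subtree!_cons i.2, subtree!_nil, leavesBefore_singleton i.2]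
          rfl
  · intro c hc hc'
    simp only [Finset.mem_insert, Finset.mem_singleton, not_or] at hc'
    have h0 := nil_notMem_of_mem_cutsFinset hc hc'.1
    have : ¬ IsCorolla (trunkTree (node cs) c) := fun h =>
      hc'.2 (eq_rootCut hc h0 ((isCorolla_trunkTree hd.1 hcs h0).1 h))
    rw [trunkPart_of_nil_notMem hcs w h0]
    simp [charD, this]

theorem goodTree_child {cs : List PTree} {w : List A} (hd : GoodTree (node cs, w))
    (i : Fin cs.length) (hi : cs[i] ≠ leaf) : GoodTree (cs[i], childWord cs w i) := by
  refine ⟨hd.1.child i.2, hi, ?_⟩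
  have h1 := leavesLeft_add_numSectors_le hd.1 i
  have h2 : w.length = numSectors (node cs) := hd.2.2
  simp only [childWord, List.length_take, List.length_drop]
  omega

theorem convPowD_charD_singleton [Ring A] (φ : A → ℂ) (k : ℕ) {t : PTree} {w : List A}
    (hd : GoodTree (t, w)) : convPowD (charD φ) k [(t, w)] =
      (strictCount (ProperAncestor t) k : ℂ) * phiPi φ t w := by
  classical
  induction k generalizing t w with
  | zero =>
    obtain ⟨cs⟩ := t
    rw [strictCount_node_zero (ne_leaf_iff.1 hd.2.1)]
    simp [convPowD, epsD]
  | succ k ih =>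
    obtain ⟨cs⟩ := t
    have hcs : cs ≠ [] := ne_leaf_iff.1 hd.2.1
    have hm := (isMultiplicative_charD φ).convPowD k
    rw [convPowD, (isMultiplicative_charD φ).convD_cons hm, convD_nil, hm.map_nil,
      (isMultiplicative_charD φ).map_nil, sum_cuts_charD φ hm hd, ih hd,
      strictCount_node_succ hcs, phiPi_node φ hcs hd.1 hd.2.2]
    have : ∀ i : Fin cs.length, (if cs[i] = leaf then 1 else
        convPowD (charD φ) k [(cs[i], childWord cs w i)]) =
        (strictCount (ProperAncestor cs[i]) k : ℂ) * phiPi φ cs[i] (childWord cs w i) := by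
      intro i
      split_ifs with hi
      · rw [hi, strictCount_leaf, phiPi_leaf, Nat.cast_one, one_mul]
      · exact ih (goodTree_child hd i hi)
    simp_rw [this, Finset.prod_mul_distrib]
    push_cast
    ring

end PTree

/-- Let `(A, φ)` be a noncommutative probability space, `Φ̃ : H_S(A) → ℂ`
the character extending `φ` and `Φ̂ = Φ̃ − ε_A`. For every `n ≥ 1`, every Schröder tree
`t ∈ ST(n)` decorated by a word `w = a_1 ⋯ a_n`, and every `k ≥ 1`:
`Φ̂^{*k}(t ⊗ w) = ω_k(sk(t)) · φ_{π(t)}(a_1,…,a_n)`. -/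
theorem convolution_powers_on_decorated_schroder_trees
    (A : Type*) [Ring A] [Algebra ℂ A] (φ : A →ₗ[ℂ] ℂ) (hφ : φ 1 = 1)
    (n : ℕ) (hn : 1 ≤ n) (t : PTree) (ht : t ∈ PTree.ST n)
    (w : List A) (hw : w.length = n) (k : ℕ) (hk : 1 ≤ k) :
    PTree.convPowD (PTree.charHatD (fun x => φ x)) k [(t, w)] =
      (PTree.omegaSkK t k : ℂ) * PTree.phiPi (fun x => φ x) t w := by
  have hd : PTree.GoodTree (t, w) := by
    refine ⟨ht.1, ?_, ?_⟩
    · rintro rfl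
      have := ht.2
      rw [PTree.numLeaves_leaf] at this
      omega
    · have := ht.2
      simp only [PTree.numSectors]
      omega
  rw [PTree.omegaSkK_eq_strictSurjCount]
  refine eq_of_binomial_sum_eq
    (a := fun k => PTree.convPowD (PTree.charHatD fun x => φ x) k [(t, w)])
    (b := fun k =>
      (strictSurjCount (PTree.ProperAncestor t) k : ℂ) * PTree.phiPi (fun x => φ x) t w)
    (fun m => ?_) k
  rw [← PTree.convPowD_charD_eq_sum_choose _ _ (by simpa [PTree.GoodForest] using hd),
    PTree.convPowD_charD_singleton _ _ hd, strictCount_eq_sum_choose]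
  push_cast
  rw [Finset.sum_mul]
  exact Finset.sum_congr rfl fun j _ => by ring
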